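/- arXiv:2601.02546 — 2 statements merged into one kernel-verified Lean document; each statement's English description precedes it below -/
import Mathlib

section
/- The composite ρ := σ∘τ (i.e. ρ(x) = σ(τ(x))) is a group automorphism of P₃ of order 3: ρ∘ρ∘ρ = id and ρ ≠ id. -/
/-- `P₃ = ℤ⁶ × 𝔽₂¹¹`, with coordinates `a1,…,a6 : ℤ` and `a7,…,a17 : 𝔽₂`. -/
structure P3 where
  a1 : ℤ
  a2 : ℤ
  a3 : ℤ
  a4 : ℤ
  a5 : ℤ
  a6 : ℤ
  a7 : ZMod 2
  a8 : ZMod 2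
  a9 : ZMod 2
  a10 : ZMod 2
  a11 : ZMod 2
  a12 : ZMod 2
  a13 : ZMod 2
  a14 : ZMod 2
  a15 : ZMod 2
  a16 : ZMod 2
  a17 : ZMod 2

namespace P3

/-- Reduction of an integer coordinate modulo 2. -/
def r (x : ℤ) : ZMod 2 := (x : ZMod 2)

/-- The explicit multiplication on `P₃`. -/
def mul (α β : P3) : P3 where
  a1 := α.a1 + β.a1
  a2 := α.a2 + β.a2
  a3 := α.a3 + β.a3
  a4 := α.a4 + β.a4
  a5 := α.a5 + β.a5
  a6 := α.a6 + β.a6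
  a7 := α.a7 + β.a7 + r α.a2 * r β.a1
  a8 := α.a8 + β.a8 + r α.a3 * r β.a1
  a9 := α.a9 + β.a9 + r α.a3 * r β.a2
  a10 := α.a10 + β.a10 + r α.a5 * r β.a4
  a11 := α.a11 + β.a11 + r α.a6 * r β.a4
  a12 := α.a12 + β.a12 + r α.a6 * r β.a5
  a13 := α.a13 + β.a13 + r α.a4 * r β.a2 + r α.a5 * r β.a1
  a14 := α.a14 + β.a14 + r α.a4 * r β.a3 + r α.a6 * r β.a1
  a15 := α.a15 + β.a15 + r α.a5 * r β.a3 + r α.a6 * r β.a2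
  a16 := α.a16 + β.a16 + α.a13 * r β.a3 + α.a14 * r β.a2 + α.a15 * r β.a1
    + r α.a4 * r β.a2 * r β.a3 + r α.a5 * r β.a1 * r β.a3 + r α.a6 * r β.a1 * r β.a2
  a17 := α.a17 + β.a17 + α.a13 * r β.a6 + α.a14 * r β.a5 + α.a15 * r β.a4
    + r α.a4 * r α.a5 * r β.a3 + r α.a4 * r α.a6 * r β.a2 + r α.a5 * r α.a6 * r β.a1
    + r α.a4 * (r β.a2 * r β.a6 + r β.a5 * r β.a3)
    + r α.a5 * (r β.a1 * r β.a6 + r β.a4 * r β.a3)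
    + r α.a6 * (r β.a1 * r β.a5 + r β.a4 * r β.a2)

/-- The zero tuple. -/
def zero : P3 := ⟨0, 0, 0, 0, 0, 0, 0, 0, 0, 0, 0, 0, 0, 0, 0, 0, 0⟩

/-- The explicit inverse on `P₃`. -/
def inv (α : P3) : P3 where
  a1 := -α.a1
  a2 := -α.a2
  a3 := -α.a3
  a4 := -α.a4
  a5 := -α.a5
  a6 := -α.a6
  a7 := α.a7 + r α.a1 * r α.a2
  a8 := α.a8 + r α.a1 * r α.a3
  a9 := α.a9 + r α.a2 * r α.a3
  a10 := α.a10 + r α.a4 * r α.a5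
  a11 := α.a11 + r α.a4 * r α.a6
  a12 := α.a12 + r α.a5 * r α.a6
  a13 := α.a13 + r α.a2 * r α.a4 + r α.a1 * r α.a5
  a14 := α.a14 + r α.a3 * r α.a4 + r α.a1 * r α.a6
  a15 := α.a15 + r α.a3 * r α.a5 + r α.a2 * r α.a6
  a16 := α.a16 + α.a13 * r α.a3 + α.a14 * r α.a2 + α.a15 * r α.a1
    + r α.a4 * r α.a2 * r α.a3 + r α.a5 * r α.a1 * r α.a3 + r α.a6 * r α.a1 * r α.a2
  a17 := α.a17 + α.a13 * r α.a6 + α.a14 * r α.a5 + α.a15 * r α.a4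
    + r α.a4 * r α.a5 * r α.a3 + r α.a4 * r α.a6 * r α.a2 + r α.a5 * r α.a6 * r α.a1
    + r α.a4 * (r α.a2 * r α.a6 + r α.a5 * r α.a3)
    + r α.a5 * (r α.a1 * r α.a6 + r α.a4 * r α.a3)
    + r α.a6 * (r α.a1 * r α.a5 + r α.a4 * r α.a2)

/-- The map `σ : P₃ → P₃`. -/
def sigma (α : P3) : P3 where
  a1 := α.a4
  a2 := α.a5
  a3 := α.a6
  a4 := α.a1
  a5 := α.a2
  a6 := α.a3
  a7 := α.a10
  a8 := α.a11
  a9 := α.a12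
  a10 := α.a7
  a11 := α.a8
  a12 := α.a9
  a13 := α.a13 + r α.a1 * r α.a5 + r α.a2 * r α.a4
  a14 := α.a14 + r α.a1 * r α.a6 + r α.a3 * r α.a4
  a15 := α.a15 + r α.a2 * r α.a6 + r α.a3 * r α.a5
  a16 := α.a17 + r α.a1 * r α.a5 * r α.a6 + r α.a2 * r α.a4 * r α.a6 + r α.a3 * r α.a4 * r α.a5
  a17 := α.a16 + r α.a1 * r α.a2 * r α.a6 + r α.a1 * r α.a3 * r α.a5 + r α.a2 * r α.a3 * r α.a4

/-- The map `τ : P₃ → P₃`. -/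
def tau (α : P3) : P3 where
  a1 := α.a1 - α.a4
  a2 := α.a2 - α.a5
  a3 := α.a3 - α.a6
  a4 := -α.a4
  a5 := -α.a5
  a6 := -α.a6
  a7 := α.a7 + α.a10 + α.a13 + r α.a2 * r α.a4
  a8 := α.a8 + α.a11 + α.a14 + r α.a3 * r α.a4
  a9 := α.a9 + α.a12 + α.a15 + r α.a3 * r α.a5
  a10 := α.a10
  a11 := α.a11
  a12 := α.a12
  a13 := α.a13 + r α.a4 * r α.a5
  a14 := α.a14 + r α.a4 * r α.a6
  a15 := α.a15 + r α.a5 * r α.a6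
  a16 := α.a16 + α.a17 + r α.a4 * r α.a5 * r α.a6
  a17 := α.a17

/-- The map `ρ := σ ∘ τ`. -/
def rho : P3 → P3 := sigma ∘ tau

end P3

/-!
`σ` and `τ` are involutive automorphisms satisfying the braid relation `στσ = τστ`; they therefore
define an action of `S₃`, in which `ρ = στ` is the image of a 3-cycle. On `ℤ⁶ = ℤ² ⊗ ℤ³` this is
the standard action of `S₃` on the hexagonal lattice `ℤ²`, and the polynomials in the
`𝔽₂`-coordinates of `σ` and `τ` are cochains whose coboundaries compensate the effect of that
action on the cocycles defining the product. For instance, in the thirteenth coordinate `σ`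
replaces `α₄β₂ + α₅β₁` by `α₁β₅ + α₂β₄`, and modulo 2 the two differ by `f(α + β) - f(α) - f(β)`
with `f(α) = α₁α₅ + α₂α₄`. Each coordinate thus reduces to a polynomial identity that holds in
every commutative ring of characteristic 2.
-/

theorem mul_pow_three_eq_one_of_braid {M : Type*} [Monoid M] {s t : M}
    (hs : s * s = 1) (ht : t * t = 1) (braid : s * t * s = t * s * t) : (s * t) ^ 3 = 1 :=
  calc (s * t) ^ 3
    _ = (s * t * s) * (t * s * t) := by simp only [pow_three, mul_assoc]
    _ = (s * t * s) * (s * t * s) := by rw [braid]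
    _ = s * (t * (s * s) * t) * s := by simp only [mul_assoc]
    _ = 1 := by rw [hs, mul_one, ht, mul_one, hs]

namespace P3

open Function

attribute [ext] P3

theorem r_add (x y : ℤ) : r (x + y) = r x + r y := Int.cast_add x y

theorem r_sub (x y : ℤ) : r (x - y) = r x - r y := Int.cast_sub x y

theorem r_neg (x : ℤ) : r (-x) = -r x := Int.cast_neg x

theorem sigma_mul (α β : P3) : sigma (mul α β) = mul (sigma α) (sigma β) := by
  ext <;> simp only [sigma, mul, r_add] <;> grind

theorem tau_mul (α β : P3) : tau (mul α β) = mul (tau α) (tau β) := by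
  ext <;> simp only [tau, mul, r_add, r_sub, r_neg] <;> grind

theorem sigma_involutive : Involutive sigma := fun α ↦ by
  ext <;> simp only [sigma] <;> grind

theorem tau_involutive : Involutive tau := fun α ↦ by
  ext <;> simp only [tau, r_sub, r_neg] <;> grind

theorem sigma_tau_sigma (α : P3) : sigma (tau (sigma α)) = tau (sigma (tau α)) := by
  ext <;> simp only [sigma, tau, r_sub, r_neg] <;> grind

theorem rho_mul (α β : P3) : rho (mul α β) = mul (rho α) (rho β) := by
  simp only [rho, comp_apply, tau_mul, sigma_mul]

theorem rho_bijective : Bijective rho :=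
  sigma_involutive.bijective.comp tau_involutive.bijective

theorem rho_comp_rho_comp_rho : rho ∘ rho ∘ rho = id := by
  let s : Function.End P3 := sigma
  let t : Function.End P3 := tau
  have rho_pow_three : (s * t) ^ 3 = 1 :=
    mul_pow_three_eq_one_of_braid sigma_involutive.comp_self tau_involutive.comp_self
      (funext sigma_tau_sigma)
  exact (pow_three (s * t)).symm.trans rho_pow_three

theorem rho_ne_id : rho ≠ id := fun h ↦
  have : (0 : ℤ) = 1 := congrArg a1 (congrFun h { zero with a1 := 1 })
  zero_ne_one this

end P3

/-- `ρ := σ ∘ τ` is a group automorphism of `P₃` of order 3. -/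
theorem P3_rho_automorphism_order_three :
    (∀ α β : P3, P3.rho (P3.mul α β) = P3.mul (P3.rho α) (P3.rho β)) ∧
    Function.Bijective P3.rho ∧
    P3.rho ∘ P3.rho ∘ P3.rho = id ∧ P3.rho ≠ id :=
  ⟨P3.rho_mul, P3.rho_bijective, P3.rho_comp_rho_comp_rho, P3.rho_ne_id⟩
end

section
/- Let L be a Moufang loop in which every commutator [a,b] and every associator (a,b,c) is central. Then for all w, x, y, z ∈ L: (w·x, y, z) = (w,y,z)·(x,y,z). -/
/-- A Moufang loop: a type with a multiplication `·` and an identity `1` such that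
`1·x = x·1 = x`, the equations `a·x = b` and `y·a = b` have unique solutions, and the
left Moufang identity `((x·y)·x)·z = x·(y·(x·z))` holds. -/
class MoufangLoop (L : Type*) extends Mul L, One L where
  one_mul : ∀ x : L, 1 * x = x
  mul_one : ∀ x : L, x * 1 = x
  existsUnique_mul_left : ∀ a b : L, ∃! x : L, a * x = b
  existsUnique_mul_right : ∀ a b : L, ∃! y : L, y * a = b
  moufang : ∀ x y z : L, ((x * y) * x) * z = x * (y * (x * z))

namespace MoufangLoop

variable {L : Type*} [MoufangLoop L]

/-- The loop commutator `[a,b]`: the unique element with `a·b = (b·a)·[a,b]`. -/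
noncomputable def comm (a b : L) : L :=
  (existsUnique_mul_left (b * a) (a * b)).choose

theorem comm_spec (a b : L) : (b * a) * comm a b = a * b :=
  (existsUnique_mul_left (b * a) (a * b)).choose_spec.1

/-- The loop associator `(a,b,c)`: the unique element with `(a·b)·c = (a·(b·c))·(a,b,c)`. -/
noncomputable def assoc (a b c : L) : L :=
  (existsUnique_mul_left (a * (b * c)) ((a * b) * c)).choose

theorem assoc_spec (a b c : L) : (a * (b * c)) * assoc a b c = (a * b) * c :=
  (existsUnique_mul_left (a * (b * c)) ((a * b) * c)).choose_spec.1

/-- An element `z` is central if it commutes with every element and every associator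
involving it is trivial. -/
def IsCentral (z : L) : Prop :=
  (∀ x : L, z * x = x * z) ∧
  ∀ x y : L, assoc z x y = 1 ∧ assoc x z y = 1 ∧ assoc x y z = 1

end MoufangLoop

/-!
By hypothesis the quotient of the loop by its centre `Z` is an abelian group, and the associator
induces a function `f` on this quotient with values in `Z`. The pentagon of bracketings makes `f` a
normalized 3-cocycle, and the left Moufang identity becomes `f x y (x + z) + f (x + y) x z = 0`.
Together these make the homogeneous form of `f`, the cochain `f p (q - p) (r - q)` on the points
`0, p, q, r`, antisymmetric in `p, q, r` and invariant under `p ↦ p + q`. Such invariance identifies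
`f` with its homogeneous form, so `f` is antisymmetric, and an antisymmetric 3-cocycle is additive.
-/

namespace MoufangLoop

section Cocycle

variable {A Z : Type*} [AddCommGroup A] [AddCommGroup Z] {f : A → A → A → Z}

/-- Inhomogeneous 3-cocycles on `A` with values in the trivial `A`-module `Z`. -/
def IsCocycle₃ (f : A → A → A → Z) : Prop :=
  ∀ w x y z, f (w + x) y z + f w x (y + z) = f w x y + f w (x + y) z + f x y z

/-- The failure of `f` to be additive in its first argument. -/
def additivityDefect (f : A → A → A → Z) (w x y z : A) : Z :=
  f (w + x) y z - f w y z - f x y z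

theorem additivityDefect_swap_left (f : A → A → A → Z) (w x y z : A) :
    additivityDefect f x w y z = additivityDefect f w x y z := by
  rw [additivityDefect, additivityDefect, add_comm x w, sub_right_comm]

theorem additivityDefect_swap_right (swap₂₃ : ∀ p q r, f p r q = -f p q r) (w x y z : A) :
    additivityDefect f w x z y = -additivityDefect f w x y z := by
  simp only [additivityDefect, swap₂₃ _ y z]
  abel

namespace IsCocycle₃

theorem additivityDefect_cyclic (hf : IsCocycle₃ f) (swap₁₂ : ∀ p q r, f q p r = -f p q r)
    (swap₂₃ : ∀ p q r, f p r q = -f p q r) (w x y z : A) :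
    additivityDefect f w x y z + additivityDefect f x y w z + additivityDefect f y z w x = 0 := by
  have rotate (p q r) : f p q r = f r p q := by rw [swap₁₂ p r q, swap₂₃ p q r, neg_neg]
  have cocycle := hf w x y z
  rw [rotate w x (y + z), rotate w x y, swap₁₂ (x + y) w z] at cocycle
  simp only [additivityDefect, swap₁₂ w x z, swap₁₂ w y z, ← rotate w x z]
  grind

/-- Applying the cyclic identity to `(x, w, y, z)` and to `(w, x, z, y)` and adding shows that the
defect changes sign when its two pairs of arguments are exchanged; two of the three terms of the
cyclic identity then cancel. -/
theorem additivityDefect_eq_zero (hf : IsCocycle₃ f) (swap₁₂ : ∀ p q r, f q p r = -f p q r)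
    (swap₂₃ : ∀ p q r, f p r q = -f p q r) (w x y z : A) : additivityDefect f w x y z = 0 := by
  have cyclic := hf.additivityDefect_cyclic swap₁₂ swap₂₃
  have swap_left := additivityDefect_swap_left f
  have swap_right := additivityDefect_swap_right swap₂₃
  have exchange (w x y z) : additivityDefect f w y x z + additivityDefect f x z w y = 0 := by
    have h₁ := cyclic x w y z
    have h₂ := cyclic w x z y
    rw [swap_left w x, swap_right y z w x] at h₁
    rw [swap_right w x y z, swap_left y z] at h₂
    grind
  have cyclic_y := cyclic y w x z
  rwa [add_right_comm, exchange, zero_add] at cyclic_y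

theorem map_add_left_of_antisymm (hf : IsCocycle₃ f) (swap₁₂ : ∀ p q r, f q p r = -f p q r)
    (swap₂₃ : ∀ p q r, f p r q = -f p q r) (w x y z : A) : f (w + x) y z = f w y z + f x y z := by
  have h := hf.additivityDefect_eq_zero swap₁₂ swap₂₃ w x y z
  rwa [additivityDefect, sub_sub, sub_eq_zero] at h

end IsCocycle₃

/-- Normalized 3-cocycles satisfying the equation that the left Moufang identity imposes on the
associator. -/
structure IsMoufangCocycle (f : A → A → A → Z) : Prop where
  isCocycle₃ : IsCocycle₃ f
  map_zero_left : ∀ y z, f 0 y z = 0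
  map_zero_mid : ∀ x z, f x 0 z = 0
  map_zero_right : ∀ x y, f x y 0 = 0
  moufang : ∀ x y z, f x y (x + z) + f (x + y) x z = 0

/-- The homogeneous cochain of `f`, evaluated at the points `0, p, q, r`. -/
def homogenize (f : A → A → A → Z) (p q r : A) : Z :=
  f p (q - p) (r - q)

namespace IsMoufangCocycle

theorem map_neg_mid (hf : IsMoufangCocycle f) (x z : A) : f x (-x) z = 0 := by
  simpa [hf.map_zero_left] using hf.moufang x (-x) (z - x)

theorem map_neg_right (hf : IsMoufangCocycle f) (x y : A) : f x y (-y) = 0 := by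
  simpa [hf.map_zero_right] using hf.moufang y (x - y) (-y)

theorem map_add_neg_add (hf : IsMoufangCocycle f) (x y z : A) :
    f (x + y) (-y) (y + z) = -f x y z := by
  have cocycle := hf.isCocycle₃ x y (-y) (y + z)
  rw [neg_add_cancel_left, add_neg_cancel, hf.map_neg_right, hf.map_zero_mid, hf.map_neg_mid,
    add_zero, add_zero] at cocycle
  exact eq_neg_of_add_eq_zero_left cocycle

theorem map_add_neg_right (hf : IsMoufangCocycle f) (x y z : A) :
    f x (y + z) (-z) = -f x y z := by
  have cocycle := hf.isCocycle₃ x y z (-z)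
  rw [add_neg_cancel, hf.map_neg_right, hf.map_neg_right, hf.map_zero_right, add_zero,
    add_zero] at cocycle
  exact eq_neg_of_add_eq_zero_right cocycle.symm

theorem homogenize_swap₁₂ (hf : IsMoufangCocycle f) (p q r : A) :
    homogenize f q p r = -homogenize f p q r := by
  simpa [homogenize] using hf.map_add_neg_add p (q - p) (r - q)

theorem homogenize_swap₂₃ (hf : IsMoufangCocycle f) (p q r : A) :
    homogenize f p r q = -homogenize f p q r := by
  simpa [homogenize] using hf.map_add_neg_right p (q - p) (r - q)

theorem homogenize_add_left (hf : IsMoufangCocycle f) (p q r : A) :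
    homogenize f (p + q) q r = homogenize f p q r := by
  have moufang := hf.moufang p (q - p) (r - q - p)
  rw [add_sub_cancel, add_sub_cancel] at moufang
  have hswap := hf.homogenize_swap₁₂ q (p + q) r
  simp only [homogenize, add_sub_cancel_right, sub_add_eq_sub_sub_swap] at hswap ⊢
  rw [hswap, eq_neg_of_add_eq_zero_left moufang]

theorem homogenize_add_mid (hf : IsMoufangCocycle f) (p q r : A) :
    homogenize f p (p + q) r = homogenize f p q r := by
  rw [hf.homogenize_swap₁₂, add_comm, hf.homogenize_add_left, ← hf.homogenize_swap₁₂]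

theorem homogenize_add_right (hf : IsMoufangCocycle f) (p q r : A) :
    homogenize f p q (q + r) = homogenize f p q r := by
  have rotate (p q r) : homogenize f p q r = homogenize f r p q := by
    rw [hf.homogenize_swap₁₂ p r q, hf.homogenize_swap₂₃ p q r, neg_neg]
  rw [rotate, hf.homogenize_swap₂₃, add_comm, hf.homogenize_add_left, ← hf.homogenize_swap₂₃,
    ← rotate]

theorem homogenize_eq (hf : IsMoufangCocycle f) (x y z : A) : homogenize f x y z = f x y z := by
  rw [← hf.homogenize_add_mid, ← hf.homogenize_add_right, homogenize, add_sub_cancel_left,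
    add_sub_cancel_left]

theorem swap₁₂ (hf : IsMoufangCocycle f) (x y z : A) : f y x z = -f x y z := by
  simpa only [hf.homogenize_eq] using hf.homogenize_swap₁₂ x y z

theorem swap₂₃ (hf : IsMoufangCocycle f) (x y z : A) : f x z y = -f x y z := by
  simpa only [hf.homogenize_eq] using hf.homogenize_swap₂₃ x y z

theorem map_add_left (hf : IsMoufangCocycle f) (w x y z : A) :
    f (w + x) y z = f w y z + f x y z :=
  hf.isCocycle₃.map_add_left_of_antisymm hf.swap₁₂ hf.swap₂₃ w x y z

end IsMoufangCocycle

end Cocycle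

section Center

variable {M L : Type*} [MoufangLoop L]

theorem isMulCentral_coe [MulOneClass M] (u : Submonoid.center M) : IsMulCentral (u : M) :=
  u.2

theorem mem_center_of_mul_eq_one [MulOneClass M] [IsLeftCancelMul M] {u v : M}
    (hu : u ∈ Submonoid.center M) (huv : u * v = 1) : v ∈ Submonoid.center M := by
  have hu : IsMulCentral u := hu
  have cancel (a : M) : u * (v * a) = a := by rw [hu.left_assoc, huv, _root_.one_mul]
  have hcomm (a : M) : v * a = a * v := by
    apply mul_left_cancel (a := u)
    rw [cancel, hu.left_comm, huv, _root_.mul_one]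
  refine ⟨hcomm, fun b c ↦ ?_, fun a b ↦ ?_⟩ <;> apply mul_left_cancel (a := u)
  · rw [cancel, hu.left_assoc, cancel]
  · rw [← hcomm (a * b), cancel, hu.left_comm, ← hcomm b, cancel]

instance : MulOneClass L where
  one_mul := MoufangLoop.one_mul
  mul_one := MoufangLoop.mul_one

instance : IsLeftCancelMul L where
  mul_left_cancel a _ c h := (existsUnique_mul_left a (a * c)).unique h rfl

theorem assoc_eq_iff {a b c k : L} : assoc a b c = k ↔ a * (b * c) * k = a * b * c := by
  rw [← assoc_spec a b c, mul_right_inj, eq_comm]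

theorem assoc_eq_one_iff {a b c : L} : assoc a b c = 1 ↔ a * b * c = a * (b * c) := by
  rw [assoc_eq_iff, MoufangLoop.mul_one, eq_comm]

theorem isCentral_iff_mem_center {z : L} : IsCentral z ↔ z ∈ Submonoid.center L := by
  simp only [IsCentral, assoc_eq_one_iff]
  refine ⟨fun ⟨hcomm, hassoc⟩ ↦ ⟨hcomm, fun b c ↦ (hassoc b c).1.symm, fun a b ↦ (hassoc a b).2.2⟩,
    fun hz ↦ ⟨hz.comm, fun a b ↦ ⟨(hz.left_assoc a b).symm, hz.mid_assoc a b, hz.right_assoc a b⟩⟩⟩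

noncomputable instance : CommGroup (Submonoid.center L) :=
  letI := Submonoid.center.commMonoid' (M := L)
  commGroupOfIsUnit fun u ↦ by
    obtain ⟨v, huv, -⟩ := existsUnique_mul_left (u : L) 1
    exact .of_mul_eq_one ⟨v, mem_center_of_mul_eq_one u.2 huv⟩ (Subtype.ext huv)

variable (L) in
/-- Congruence modulo the centre. -/
def centerCon : Con L where
  r x y := ∃ u : Submonoid.center L, x = y * u
  iseqv :=
    { refl x := ⟨1, (MoufangLoop.mul_one x).symm⟩
      symm := by
        rintro _ y ⟨u, rfl⟩
        refine ⟨u⁻¹, ?_⟩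
        rw [(isMulCentral_coe u⁻¹).right_assoc, ← Submonoid.coe_mul, mul_inv_cancel,
          Submonoid.coe_one, MoufangLoop.mul_one]
      trans := by
        rintro _ _ z ⟨u, rfl⟩ ⟨v, rfl⟩
        exact ⟨v * u, (isMulCentral_coe u).right_assoc z v⟩ }
  mul' := by
    rintro _ x _ y ⟨u, rfl⟩ ⟨v, rfl⟩
    refine ⟨u * v, ?_⟩
    rw [← (isMulCentral_coe v).right_assoc, ← (isMulCentral_coe u).right_comm, Submonoid.coe_mul,
      (isMulCentral_coe v).right_assoc]

variable (L) in
/-- The central quotient `L / Z(L)`, written additively. -/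
abbrev ModCenter : Type _ := Additive (centerCon L).Quotient

namespace ModCenter

/-- The class of `x` modulo the centre. -/
def mk (x : L) : ModCenter L := Additive.ofMul (x : (centerCon L).Quotient)

theorem mk_surjective : Function.Surjective (mk : L → ModCenter L) :=
  Quotient.mk_surjective

/-- A representative in `L` of a class modulo the centre. -/
noncomputable def out (a : ModCenter L) : L := Quotient.out a

theorem mk_mul (x y : L) : mk (x * y) = mk x + mk y :=
  rfl

theorem mk_one : mk (1 : L) = 0 :=
  rfl

theorem exists_out_mk_eq (x : L) : ∃ u : Submonoid.center L, (mk x).out = x * u :=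
  (centerCon L).eq.1 (Quotient.out_eq (mk x))

end ModCenter

end Center

section Associator

variable {L : Type*} [MoufangLoop L]

theorem assoc_one_left (y z : L) : assoc 1 y z = 1 := by
  rw [assoc_eq_one_iff, MoufangLoop.one_mul, MoufangLoop.one_mul]

theorem assoc_one_mid (x z : L) : assoc x 1 z = 1 := by
  rw [assoc_eq_one_iff, MoufangLoop.one_mul, MoufangLoop.mul_one]

theorem assoc_one_right (x y : L) : assoc x y 1 = 1 := by
  rw [assoc_eq_one_iff, MoufangLoop.mul_one, MoufangLoop.mul_one]

theorem assoc_mul_center_left (u : Submonoid.center L) (x y z : L) :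
    assoc (x * u) y z = assoc x y z := by
  have hu := isMulCentral_coe u
  rw [assoc_eq_iff, ← hu.right_comm x (y * z), ← hu.right_comm, assoc_spec, hu.right_comm,
    hu.right_comm x y]

theorem assoc_mul_center_mid (u : Submonoid.center L) (x y z : L) :
    assoc x (y * u) z = assoc x y z := by
  have hu := isMulCentral_coe u
  rw [assoc_eq_iff, ← hu.right_comm y z, ← hu.right_assoc, ← hu.right_comm, assoc_spec,
    hu.right_comm, hu.right_assoc]

theorem assoc_mul_center_right (u : Submonoid.center L) (x y z : L) :
    assoc x y (z * u) = assoc x y z := by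
  have hu := isMulCentral_coe u
  rw [assoc_eq_iff, ← hu.right_assoc y z, ← hu.right_assoc, ← hu.right_comm, assoc_spec,
    hu.right_assoc]

variable (L) in
/-- Moufang loops all of whose associators are central, that is, for which the central quotient is
a group. -/
class HasCentralAssociators : Prop where
  assoc_mem_center : ∀ x y z : L, assoc x y z ∈ Submonoid.center L

variable (L) in
/-- Moufang loops of nilpotency class at most two: the central quotient is an abelian group. -/
class IsClassTwo : Prop extends HasCentralAssociators L where
  comm_mem_center : ∀ x y : L, comm x y ∈ Submonoid.center L

noncomputable instance [IsClassTwo L] : CommGroup (centerCon L).Quotient :=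
  letI : CommMonoid (centerCon L).Quotient :=
    { (centerCon L).mulOneClass with
      mul_assoc := by
        rintro ⟨x⟩ ⟨y⟩ ⟨z⟩
        exact (centerCon L).eq.2
          ⟨⟨_, HasCentralAssociators.assoc_mem_center x y z⟩, (assoc_spec x y z).symm⟩
      mul_comm := by
        rintro ⟨x⟩ ⟨y⟩
        exact (centerCon L).eq.2 ⟨⟨_, IsClassTwo.comm_mem_center x y⟩, (comm_spec x y).symm⟩ }
  commGroupOfIsUnit <| by
    rintro ⟨x⟩
    obtain ⟨y, hxy, -⟩ := existsUnique_mul_left x 1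
    exact .of_mul_eq_one (y : (centerCon L).Quotient) (congrArg _ hxy)

section HasCentralAssociators

variable [HasCentralAssociators L]

/-- The associator as an element of the centre. -/
noncomputable def centralAssoc (x y z : L) : Submonoid.center L :=
  ⟨assoc x y z, HasCentralAssociators.assoc_mem_center x y z⟩

theorem mul_assoc_centralAssoc (x y z : L) : x * y * z = x * (y * z) * centralAssoc x y z :=
  (assoc_spec x y z).symm

/-- Both sides compare the two extreme bracketings of `w * x * y * z`, along the two sides of the
associativity pentagon. -/
theorem centralAssoc_pentagon (w x y z : L) :
    centralAssoc (w * x) y z * centralAssoc w x (y * z) =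
      centralAssoc w x y * centralAssoc w (x * y) z * centralAssoc x y z := by
  apply Subtype.ext
  apply mul_left_cancel (a := w * (x * (y * z)))
  rw [mul_comm (centralAssoc (w * x) y z), mul_comm _ (centralAssoc x y z),
    mul_comm (centralAssoc w x y)]
  simp only [Submonoid.coe_mul, ← (isMulCentral_coe (centralAssoc _ _ _)).right_assoc]
  calc w * (x * (y * z)) * centralAssoc w x (y * z) * centralAssoc (w * x) y z
      = w * x * y * z := by simp only [← mul_assoc_centralAssoc]
    _ = w * (x * y) * z * centralAssoc w x y := by
      rw [(isMulCentral_coe _).right_comm, ← mul_assoc_centralAssoc]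
    _ = w * (x * y * z) * centralAssoc w (x * y) z * centralAssoc w x y := by
      rw [← mul_assoc_centralAssoc w]
    _ = w * (x * (y * z)) * centralAssoc x y z * centralAssoc w (x * y) z *
        centralAssoc w x y := by
      rw [(isMulCentral_coe (centralAssoc x y z)).right_assoc, ← mul_assoc_centralAssoc x]

theorem centralAssoc_moufang (x y z : L) :
    centralAssoc x y (x * z) * centralAssoc (x * y) x z = 1 := by
  have hu := isMulCentral_coe (centralAssoc (x * y) x z)
  apply Subtype.ext
  apply mul_left_cancel (a := x * (y * (x * z)))
  rw [Submonoid.coe_mul, ← hu.right_assoc, ← mul_assoc_centralAssoc, ← mul_assoc_centralAssoc,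
    moufang, Submonoid.coe_one, MoufangLoop.mul_one]

/-- The function that the associator induces on the central quotient, computed on arbitrary
representatives. -/
noncomputable def assocCocycle (a b c : ModCenter L) : Additive (Submonoid.center L) :=
  Additive.ofMul (centralAssoc a.out b.out c.out)

theorem assocCocycle_mk (x y z : L) :
    assocCocycle (.mk x) (.mk y) (.mk z) = Additive.ofMul (centralAssoc x y z) := by
  obtain ⟨u, hu⟩ := ModCenter.exists_out_mk_eq x
  obtain ⟨v, hv⟩ := ModCenter.exists_out_mk_eq y
  obtain ⟨w, hw⟩ := ModCenter.exists_out_mk_eq z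
  refine congrArg Additive.ofMul (Subtype.ext ?_)
  simp only [centralAssoc, hu, hv, hw, assoc_mul_center_left, assoc_mul_center_mid,
    assoc_mul_center_right]

end HasCentralAssociators

theorem isMoufangCocycle_assocCocycle [IsClassTwo L] :
    IsMoufangCocycle (assocCocycle (L := L)) where
  isCocycle₃ := by
    simp only [IsCocycle₃, ModCenter.mk_surjective.forall, ← ModCenter.mk_mul, assocCocycle_mk]
    exact fun w x y z ↦ congrArg Additive.ofMul (centralAssoc_pentagon w x y z)
  map_zero_left := by
    simp only [ModCenter.mk_surjective.forall, ← ModCenter.mk_one, assocCocycle_mk]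
    exact fun y z ↦ congrArg Additive.ofMul (Subtype.ext (assoc_one_left y z))
  map_zero_mid := by
    simp only [ModCenter.mk_surjective.forall, ← ModCenter.mk_one, assocCocycle_mk]
    exact fun x z ↦ congrArg Additive.ofMul (Subtype.ext (assoc_one_mid x z))
  map_zero_right := by
    simp only [ModCenter.mk_surjective.forall, ← ModCenter.mk_one, assocCocycle_mk]
    exact fun x y ↦ congrArg Additive.ofMul (Subtype.ext (assoc_one_right x y))
  moufang := by
    simp only [ModCenter.mk_surjective.forall, ← ModCenter.mk_mul, assocCocycle_mk]
    exact fun x y z ↦ congrArg Additive.ofMul (centralAssoc_moufang x y z)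

end Associator

end MoufangLoop

open MoufangLoop in
/-- STATEMENT 18: in a Moufang loop in which all commutators and associators are central,
`(w·x, y, z) = (w,y,z)·(x,y,z)`. -/
theorem assoc_mul {L : Type*} [MoufangLoop L]
    (hcomm : ∀ a b : L, IsCentral (comm a b))
    (hassoc : ∀ a b c : L, IsCentral (assoc a b c)) :
    ∀ w x y z : L, assoc (w * x) y z = assoc w y z * assoc x y z := by
  intro w x y z
  have : IsClassTwo L :=
    { assoc_mem_center x y z := isCentral_iff_mem_center.1 (hassoc x y z)
      comm_mem_center x y := isCentral_iff_mem_center.1 (hcomm x y) }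
  have additive := isMoufangCocycle_assocCocycle.map_add_left
    (ModCenter.mk w) (ModCenter.mk x) (ModCenter.mk y) (ModCenter.mk z)
  rw [← ModCenter.mk_mul] at additive
  simp only [assocCocycle_mk] at additive
  exact congrArg Subtype.val (Additive.ofMul.injective additive)
end
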